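/- arXiv:1509.04088 — 2 statements merged into one kernel-verified Lean document; each statement's English description precedes it below -/
import Mathlib

section
/- Let S be a finite semigroup, δ the homomorphism from nonempty words over a finite alphabet A to S induced by a map A → S, and k > |S|. Let a_1⋯a_n be a word over A with n ≥ k, and set r = n−k+1. For each ℓ ∈ {1,…,r}, let j_ℓ be the minimum index j ∈ {ℓ+1,…,ℓ+k−1} such that δ(a_ℓ⋯a_{i−1}) = δ(a_ℓ⋯a_j) for some i ∈ {ℓ+1,…,j}, let i_ℓ be the minimum such i, and let u_ℓ = a_{i_ℓ}⋯a_{j_ℓ}. Then for all positive integers m_1,…,m_r, δ(a_1⋯a_n) = δ(a_1⋯a_{j_1})·δ(u_1)^{m_1}·δ(a_{j_1+1}⋯a_{j_2})·δ(u_2)^{m_2}·⋯·δ(a_{j_{r−1}+1}⋯a_{j_r})·δ(u_r)^{m_r}·δ(a_{j_r+1}⋯a_n), where a factor δ(a_{p+1}⋯a_q) is omitted (treated as an identity) whenever p = q. -/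
/-- `spow x m` is the `m`-th power `x^m` of `x` in a semigroup, for `m ≥ 1`
(with the junk value `spow x 0 = x`). -/
def spow {S : Type*} [Semigroup S] (x : S) : ℕ → S
  | 0 => x
  | 1 => x
  | n + 2 => spow x (n + 1) * x

/-- `sprod f a b` is the product `f a * f (a+1) * ⋯ * f b` in a semigroup (for `a ≤ b`). -/
def sprod {S : Type*} [Semigroup S] (f : ℕ → S) (a b : ℕ) : S :=
  (List.range (b - a)).foldl (fun x r => x * f (a + r + 1)) (f a)

/-! If a prefix product `x` equals itself after reading a further factor `u`, then `x * u = x`, so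
any power of `u` may be inserted after `x`. Equality of two prefix products is preserved by
multiplying on the left, so a repetition found in a window starting at `ℓ` is also a repetition of
the prefixes of the whole word. For the same reason the end of the first repetition is monotone in
the starting position of the window, so the segments between consecutive ends concatenate to the
word. -/

section Semigroup

variable {S : Type*} [Semigroup S]

theorem spow_succ (x : S) {m : ℕ} (hm : 1 ≤ m) : spow x (m + 1) = spow x m * x := by
  obtain ⟨m, rfl⟩ := Nat.exists_eq_add_of_le' hm
  rfl

theorem mul_spow_eq_self {x u : S} (h : x * u = x) {m : ℕ} (hm : 1 ≤ m) : x * spow u m = x := by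
  induction m, hm using Nat.le_induction with
  | base => exact h
  | succ m hm ih => rw [spow_succ u hm, ← mul_assoc, ih, h]

theorem sprod_self (f : ℕ → S) (a : ℕ) : sprod f a a = f a := by
  simp [sprod]

theorem sprod_succ (f : ℕ → S) {a b : ℕ} (h : a ≤ b) :
    sprod f a (b + 1) = sprod f a b * f (b + 1) := by
  simp [sprod, Nat.sub_add_comm h, List.range_succ, Nat.add_sub_cancel' h]

theorem sprod_pred_mul_sprod (f : ℕ → S) {a b c : ℕ} (hab : a < b) (hbc : b ≤ c) :
    sprod f a (b - 1) * sprod f b c = sprod f a c := by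
  induction c, hbc using Nat.le_induction with
  | base =>
    obtain ⟨b, rfl⟩ := Nat.exists_eq_add_of_lt hab
    rw [sprod_self, sprod_succ f (Nat.le_add_right a b), Nat.add_sub_cancel]
  | succ c hbc ih => rw [sprod_succ f hbc, sprod_succ f (hab.le.trans hbc), ← mul_assoc, ih]

/-- `mulSegment f x p q` is `x * f (p + 1) * ⋯ * f q`, with the segment omitted when it is empty;
it appends a possibly empty gap although a semigroup has no identity. -/
def mulSegment (f : ℕ → S) (x : S) (p q : ℕ) : S :=
  if p < q then x * sprod f (p + 1) q else x

theorem mulSegment_sprod (f : ℕ → S) {a p q : ℕ} (hap : a ≤ p) (hpq : p ≤ q) :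
    mulSegment f (sprod f a p) p q = sprod f a q := by
  rcases hpq.eq_or_lt with rfl | hlt
  · exact if_neg (lt_irrefl p)
  · exact (if_pos hlt).trans (sprod_pred_mul_sprod f (Nat.lt_succ_of_le hap) hlt)

/-- `interleavedProd f e v t` is the product of the word `f 1 ⋯ f (e (t + 1))` cut at the positions
`e 1, …, e (t + 1)`, with the factor `v ℓ` inserted after position `e ℓ`. -/
def interleavedProd (f : ℕ → S) (e : ℕ → ℕ) (v : ℕ → S) (t : ℕ) : S :=
  (List.range t).foldl (fun x p => mulSegment f x (e (p + 1)) (e (p + 2)) * v (p + 2))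
    (sprod f 1 (e 1) * v 1)

theorem interleavedProd_succ (f : ℕ → S) (e : ℕ → ℕ) (v : ℕ → S) (t : ℕ) :
    interleavedProd f e v (t + 1) =
      mulSegment f (interleavedProd f e v t) (e (t + 1)) (e (t + 2)) * v (t + 2) := by
  simp [interleavedProd, List.range_succ]

theorem interleavedProd_eq_sprod (f : ℕ → S) {e : ℕ → ℕ} {v : ℕ → S} {t : ℕ} (hpos : 1 ≤ e 1)
    (hmono : MonotoneOn e (Set.Icc 1 (t + 1)))
    (habsorb : ∀ ℓ ∈ Set.Icc 1 (t + 1), sprod f 1 (e ℓ) * v ℓ = sprod f 1 (e ℓ)) :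
    interleavedProd f e v t = sprod f 1 (e (t + 1)) := by
  induction t with
  | zero => exact habsorb 1 (by simp)
  | succ t ih =>
    have hsub : Set.Icc 1 (t + 1) ⊆ Set.Icc 1 (t + 2) := Set.Icc_subset_Icc_right (by omega)
    have hfirst : e 1 ≤ e (t + 1) := hmono (by simp) (by simp) (by omega)
    have hstep : e (t + 1) ≤ e (t + 2) := hmono (by simp) (by simp) (by omega)
    rw [interleavedProd_succ, ih (hmono.mono hsub) fun ℓ hℓ => habsorb ℓ (hsub hℓ),
      mulSegment_sprod f (hpos.trans hfirst) hstep, habsorb (t + 2) (by simp)]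

/-- The factor `f i ⋯ f j` is pumpable in the word `f ℓ f (ℓ + 1) ⋯`: reading it after the nonempty
prefix `f ℓ ⋯ f (i - 1)` does not change the product. -/
def IsPumpable (f : ℕ → S) (ℓ i j : ℕ) : Prop :=
  ℓ + 1 ≤ i ∧ i ≤ j ∧ sprod f ℓ (i - 1) = sprod f ℓ j

theorem IsPumpable.mul_sprod {f : ℕ → S} {ℓ i j : ℕ} (h : IsPumpable f ℓ i j) :
    sprod f ℓ j * sprod f i j = sprod f ℓ j := by
  obtain ⟨hi, hij, heq⟩ := h
  calc
    sprod f ℓ j * sprod f i j = sprod f ℓ (i - 1) * sprod f i j := by rw [heq]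
    _ = sprod f ℓ j := sprod_pred_mul_sprod f hi hij

theorem IsPumpable.extend_left {f : ℕ → S} {ℓ ℓ' i j : ℕ} (h : IsPumpable f ℓ' i j)
    (hℓ : ℓ ≤ ℓ') : IsPumpable f ℓ i j := by
  rcases hℓ.eq_or_lt with rfl | hlt
  · exact h
  · obtain ⟨hi, hij, heq⟩ := h
    refine ⟨by omega, hij, ?_⟩
    calc
      sprod f ℓ (i - 1) = sprod f ℓ (ℓ' - 1) * sprod f ℓ' (i - 1) :=
        (sprod_pred_mul_sprod f hlt (by omega)).symm
      _ = sprod f ℓ (ℓ' - 1) * sprod f ℓ' j := by rw [heq]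
      _ = sprod f ℓ j := sprod_pred_mul_sprod f hlt (by omega)

/-- The end positions of the pumpable factors in the window of length `k` starting at `ℓ`. -/
def pumpEnds (f : ℕ → S) (k ℓ : ℕ) : Set ℕ :=
  {j | ℓ + 1 ≤ j ∧ j ≤ ℓ + k - 1 ∧ ∃ i, IsPumpable f ℓ i j}

/-- The index `j_ℓ`, at which the first pumpable factor of the window of length `k` starting at `ℓ`
ends (`0` if the window has no pumpable factor). -/
noncomputable def firstPumpEnd (f : ℕ → S) (k ℓ : ℕ) : ℕ :=
  sInf (pumpEnds f k ℓ)

/-- The index `i_ℓ`, the least start of a pumpable factor ending at `j_ℓ` (`0` if there is none). -/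
noncomputable def firstPumpStart (f : ℕ → S) (k ℓ : ℕ) : ℕ :=
  sInf {i | IsPumpable f ℓ i (firstPumpEnd f k ℓ)}

/-- The value in `S` of the factor `u_ℓ`, which runs from `i_ℓ` to `j_ℓ`. -/
noncomputable def firstPump (f : ℕ → S) (k ℓ : ℕ) : S :=
  sprod f (firstPumpStart f k ℓ) (firstPumpEnd f k ℓ)

theorem pumpEnds_nonempty_of_card_lt [Fintype S] (f : ℕ → S) {k : ℕ} (hk : Fintype.card S < k)
    (ℓ : ℕ) : (pumpEnds f k ℓ).Nonempty := by
  obtain ⟨x, y, hne, heq⟩ := Fintype.exists_ne_map_eq_of_card_lt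
    (fun t : Fin k => sprod f ℓ (ℓ + t)) (by simpa using hk)
  wlog hxy : x < y generalizing x y
  · exact this y x hne.symm heq.symm (hne.lt_or_gt.resolve_left hxy)
  · exact ⟨ℓ + y, by omega, by omega, ℓ + x + 1, by omega, by omega, heq⟩

section Window

variable {f : ℕ → S} {k ℓ : ℕ}

theorem firstPumpEnd_mem (h : (pumpEnds f k ℓ).Nonempty) : firstPumpEnd f k ℓ ∈ pumpEnds f k ℓ :=
  Nat.sInf_mem h

theorem isPumpable_firstPump (h : (pumpEnds f k ℓ).Nonempty) :
    IsPumpable f ℓ (firstPumpStart f k ℓ) (firstPumpEnd f k ℓ) :=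
  Nat.sInf_mem (firstPumpEnd_mem h).2.2

theorem sprod_mul_firstPump {s : ℕ} (hs : s ≤ ℓ) (h : (pumpEnds f k ℓ).Nonempty) :
    sprod f s (firstPumpEnd f k ℓ) * firstPump f k ℓ = sprod f s (firstPumpEnd f k ℓ) :=
  ((isPumpable_firstPump h).extend_left hs).mul_sprod

theorem firstPumpEnd_le_firstPumpEnd {ℓ' : ℕ} (hℓ : ℓ ≤ ℓ') (h : (pumpEnds f k ℓ).Nonempty)
    (h' : (pumpEnds f k ℓ').Nonempty) : firstPumpEnd f k ℓ ≤ firstPumpEnd f k ℓ' := by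
  obtain ⟨hlower', -, i, hi⟩ := firstPumpEnd_mem h'
  rcases le_or_gt (firstPumpEnd f k ℓ') (ℓ + k - 1) with hin | hout
  · exact Nat.sInf_le ⟨by omega, hin, i, hi.extend_left hℓ⟩
  · exact (firstPumpEnd_mem h).2.1.trans hout.le

end Window

theorem statement3_general (f : ℕ → S) {k n : ℕ} (hn : k ≤ n)
    (hpump : ∀ ℓ ∈ Set.Icc 1 (n - k + 1), (pumpEnds f k ℓ).Nonempty)
    (m : ℕ → ℕ) (hm : ∀ ℓ ∈ Set.Icc 1 (n - k + 1), 1 ≤ m ℓ) :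
    sprod f 1 n =
      mulSegment f
        (interleavedProd f (firstPumpEnd f k) (fun ℓ => spow (firstPump f k ℓ) (m ℓ)) (n - k))
        (firstPumpEnd f k (n - k + 1)) n := by
  have hfirst := firstPumpEnd_mem (hpump 1 (by simp))
  have hlast := firstPumpEnd_mem (hpump (n - k + 1) (by simp))
  have hmono : MonotoneOn (firstPumpEnd f k) (Set.Icc 1 (n - k + 1)) := fun ℓ hℓ ℓ' hℓ' hle =>
    firstPumpEnd_le_firstPumpEnd hle (hpump ℓ hℓ) (hpump ℓ' hℓ')
  have hlast_le : firstPumpEnd f k (n - k + 1) ≤ n := hlast.2.1.trans (by omega)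
  rw [interleavedProd_eq_sprod f (Nat.le_of_succ_le hfirst.1) hmono fun ℓ hℓ =>
      mul_spow_eq_self (sprod_mul_firstPump hℓ.1 (hpump ℓ hℓ)) (hm ℓ hℓ),
    mulSegment_sprod f ((Nat.le_add_left 1 _).trans (Nat.le_of_succ_le hlast.1)) hlast_le]

end Semigroup

/-- For a finite semigroup `S`, `δ` induced by `φ : A → S`, `k > |S|`, a word `a 1 ⋯ a n`
with `n ≥ k`, `r = n-k+1`, and for each `ℓ` the indices `j_ℓ = jj ℓ` (minimal
`j ∈ {ℓ+1,…,ℓ+k-1}` with `δ(a ℓ ⋯ a (i-1)) = δ(a ℓ ⋯ a j)` for some `i ∈ {ℓ+1,…,j}`),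
`i_ℓ = ii ℓ` (the minimal such `i`) and `u_ℓ = δ(a (i_ℓ) ⋯ a (j_ℓ))`:
for all positive exponents `m 1, …, m r`,
`δ(a 1 ⋯ a n) = δ(a 1 ⋯ a (j_1))·u_1^(m 1)·δ(a (j_1+1) ⋯ a (j_2))·u_2^(m 2)·⋯·u_r^(m r)·δ(a (j_r+1) ⋯ a n)`,
where a gap factor `δ(a (p+1) ⋯ a q)` is omitted whenever `p = q` (encoded by the `if`s). -/
theorem statement3 {A S : Type*} [Fintype A] [Semigroup S] [Fintype S]
    (φ : A → S) {k n : ℕ} (hk : Fintype.card S < k) (hn : k ≤ n) (a : ℕ → A) :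
    let f : ℕ → S := fun p => φ (a p)
    let J : ℕ → Set ℕ := fun ℓ =>
      {j | ℓ + 1 ≤ j ∧ j ≤ ℓ + k - 1 ∧
        ∃ i, ℓ + 1 ≤ i ∧ i ≤ j ∧ sprod f ℓ (i - 1) = sprod f ℓ j}
    let jj : ℕ → ℕ := fun ℓ => sInf (J ℓ)
    let ii : ℕ → ℕ := fun ℓ =>
      sInf {i | ℓ + 1 ≤ i ∧ i ≤ jj ℓ ∧ sprod f ℓ (i - 1) = sprod f ℓ (jj ℓ)}
    let u : ℕ → S := fun ℓ => sprod f (ii ℓ) (jj ℓ)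
    let r : ℕ := n - k + 1
    ∀ m : ℕ → ℕ, (∀ ℓ, 1 ≤ ℓ → ℓ ≤ r → 1 ≤ m ℓ) →
      sprod f 1 n =
        (let core : S :=
          (List.range (r - 1)).foldl
            (fun x p =>
              (if jj (p + 1) < jj (p + 2) then
                  x * sprod f (jj (p + 1) + 1) (jj (p + 2))
                else x) * spow (u (p + 2)) (m (p + 2)))
            (sprod f 1 (jj 1) * spow (u 1) (m 1))
        if jj r < n then core * sprod f (jj r + 1) n else core) := by
  intro _ _ _ _ _ _ m hm
  exact statement3_general (fun p => φ (a p)) hn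
    (fun ℓ _ => pumpEnds_nonempty_of_card_lt _ hk ℓ) m fun ℓ hℓ => hm ℓ hℓ.1 hℓ.2
end

section
/- Let A be a finite alphabet and k ≥ 1. For every nonempty word w over A, ν(β'_A(w)) = Φ_k(w), where Φ_k(w) is regarded as a word over the alphabet consisting of the length-(k+1) words over A. -/
/-- `tk k w` is the longest suffix of the word `w` of length at most `k`. -/
def tk {A : Type*} (k : ℕ) (w : List A) : List A := w.drop (w.length - k)

/-- Auxiliary function: `betaAux k pre w` is the word over `B_k = A* × A` whose `p`-th
letter is `(tk k (pre ++ (first p-1 letters of w)), p-th letter of w)`. -/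
def betaAux {A : Type*} (k : ℕ) : List A → List A → List (List A × A)
  | _, [] => []
  | pre, a :: w => (tk k pre, a) :: betaAux k (pre ++ [a]) w

/-- `betak k w` is the word `β'_A(w)` over `B_k` whose `p`-th letter is
`(tk k (a 1 ⋯ a (p-1)), a p)` for `w = a 1 ⋯ a n`. -/
def betak {A : Type*} (k : ℕ) (w : List A) : List (List A × A) := betaAux k [] w

/-- `Phik k w` is the list of all factors of `w` of length `k+1`, in order of occurrence,
regarded as a word over the alphabet of length-`(k+1)` words over `A`. -/
def Phik {A : Type*} (k : ℕ) (w : List A) : List (List A) :=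
  (List.range (w.length - k)).map fun p => (w.drop p).take (k + 1)

/-- `nuk k` is the monoid homomorphism `ν` from words over `B_k` to words over `A^{k+1}`
determined on letters by `ν(w', a) = w'a` if `|w'| = k and `ν(w', a) = 1` if `|w'| < k`. -/
def nuk {A : Type*} (k : ℕ) (l : List (List A × A)) : List (List A) :=
  l.filterMap fun b => if b.1.length = k then some (b.1 ++ [b.2]) else none

/-!
Append a letter `a` to `w`. On the side of `β'` this adds the letter `(t_k(w), a)`, which `ν` erases
when `|w| < k` and sends to `t_k(w)a` otherwise. On the side of `Φ_k` the only possible new factor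
is the suffix of length `k + 1` of `wa`, which exists exactly when `k ≤ |w|` and is `t_k(w)a`.
-/

section

variable {A : Type*} {k : ℕ} {w : List A}

theorem length_tk (k : ℕ) (w : List A) : (tk k w).length = min k w.length := by
  simp only [tk, List.length_drop]
  omega

theorem betaAux_append (k : ℕ) (pre u v : List A) :
    betaAux k pre (u ++ v) = betaAux k pre u ++ betaAux k (pre ++ u) v := by
  induction u generalizing pre with
  | nil => simp [betaAux]
  | cons a u ih => simp [betaAux, ih]

theorem betak_concat (k : ℕ) (w : List A) (a : A) :
    betak k (w ++ [a]) = betak k w ++ [(tk k w, a)] := by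
  simp [betak, betaAux_append, betaAux]

theorem nuk_append (k : ℕ) (l m : List (List A × A)) :
    nuk k (l ++ m) = nuk k l ++ nuk k m :=
  List.filterMap_append

theorem nuk_singleton_tk_of_length_lt (h : w.length < k) (a : A) :
    nuk k [(tk k w, a)] = [] := by
  have hlen : (tk k w).length ≠ k := by rw [length_tk]; omega
  simp [nuk, hlen]

theorem nuk_singleton_tk_of_le_length (h : k ≤ w.length) (a : A) :
    nuk k [(tk k w, a)] = [tk k w ++ [a]] := by
  have hlen : (tk k w).length = k := by rw [length_tk, min_eq_left h]
  simp [nuk, hlen]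

theorem Phik_eq_nil (h : w.length ≤ k) : Phik k w = [] := by
  simp [Phik, Nat.sub_eq_zero_of_le h]

theorem Phik_concat_of_le_length (h : k ≤ w.length) (a : A) :
    Phik k (w ++ [a]) = Phik k w ++ [tk k w ++ [a]] := by
  have hcount : (w ++ [a]).length - k = (w.length - k) + 1 := by
    rw [List.length_append, List.length_singleton, Nat.sub_add_comm h]
  have hold : ∀ p ∈ List.range (w.length - k),
      ((w ++ [a]).drop p).take (k + 1) = (w.drop p).take (k + 1) := by
    intro p hp
    have hp : p < w.length - k := List.mem_range.mp hp
    rw [List.drop_append_of_le_length (by omega),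
      List.take_append_of_le_length (by rw [List.length_drop]; omega)]
  have hlast : ((w ++ [a]).drop (w.length - k)).take (k + 1) = tk k w ++ [a] := by
    rw [List.drop_append_of_le_length (Nat.sub_le _ _), ← tk, List.take_of_length_le]
    rw [List.length_append, length_tk, min_eq_left h, List.length_singleton]
  rw [Phik, hcount, List.range_succ, List.map_append, List.map_congr_left hold,
    List.map_singleton, hlast, ← Phik]

theorem statement11_general (k : ℕ) (w : List A) : nuk k (betak k w) = Phik k w := by
  induction w using List.reverseRecOn with
  | nil => simp [nuk, betak, betaAux, Phik]
  | append_singleton w a ih =>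
    rw [betak_concat, nuk_append, ih]
    obtain h | h := lt_or_ge w.length k
    · have hwa : (w ++ [a]).length ≤ k := by simpa using h
      rw [nuk_singleton_tk_of_length_lt h, Phik_eq_nil h.le, Phik_eq_nil hwa, List.append_nil]
    · rw [nuk_singleton_tk_of_le_length h, Phik_concat_of_le_length h]

end

/-- For every nonempty word `w` over `A`, `ν(β'_A(w)) = Φ_k(w)`. -/
theorem statement11 {A : Type*} [Fintype A] {k : ℕ} (hk : 1 ≤ k)
    (w : List A) (hw : w ≠ []) :
    nuk k (betak k w) = Phik k w :=
  statement11_general k w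
end
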